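/- Let m be a natural number, X a metric space, λ a real number with 0 < λ < 1, and ε > 0. Let φ : X → X be a bijective similarity of ratio λ. Let e be a map from the open ball B(0, ε) of the Euclidean space ℝ^m to X such that: dist(e x, e y) = ‖x − y‖ for all x, y with ‖x‖ < ε and ‖y‖ < ε; the image of e equals the open metric ball of radius ε centered at q := e(0) in X; and φ(e x) = e(λ • x) whenever ‖x‖ < ε. Then there exists a surjective isometry Φ : ℝ^m → X which agrees with e on B(0, ε); in particular, X is isometric to the Euclidean space ℝ^m. -/

import Mathlib

/-- The metric-space core of the gluing construction: a local isometry from a ball of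
Euclidean space, equivariant with respect to a contracting similarity, extends to a
global surjective isometry from Euclidean space. -/
theorem stmt_0 (m : ℕ) (X : Type*) [MetricSpace X]
    (lam ε : ℝ) (hlam0 : 0 < lam) (hlam1 : lam < 1) (hε : 0 < ε)
    (φ : X → X) (hφbij : Function.Bijective φ)
    (hφsim : ∀ x y : X, dist (φ x) (φ y) = lam * dist x y)
    (e : EuclideanSpace ℝ (Fin m) → X)
    (he_iso : ∀ x y : EuclideanSpace ℝ (Fin m), ‖x‖ < ε → ‖y‖ < ε →
      dist (e x) (e y) = ‖x - y‖)
    (he_im : e '' {x : EuclideanSpace ℝ (Fin m) | ‖x‖ < ε} = Metric.ball (e 0) ε)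
    (he_eq : ∀ x : EuclideanSpace ℝ (Fin m), ‖x‖ < ε → φ (e x) = e (lam • x)) :
    ∃ Φ : EuclideanSpace ℝ (Fin m) → X,
      Function.Surjective Φ ∧ Isometry Φ ∧
        ∀ x : EuclideanSpace ℝ (Fin m), ‖x‖ < ε → Φ x = e x := by
  have hsim : ∀ (n : ℕ) (x y : X), dist (φ^[n] x) (φ^[n] y) = lam ^ n * dist x y := by
    intro n
    induction n with
    | zero => intro x y; simp
    | succ k ih =>
      intro x y
      rw [Function.iterate_succ_apply, Function.iterate_succ_apply, ih, hφsim, pow_succ]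
      ring
  have hsmall : ∀ (n : ℕ) (x : EuclideanSpace ℝ (Fin m)), ‖x‖ < ε → ‖lam ^ n • x‖ < ε := by
    intro n x hx
    have hp : 0 < lam ^ n := pow_pos hlam0 n
    rw [norm_smul, Real.norm_of_nonneg hp.le]
    have h1 : lam ^ n ≤ 1 := pow_le_one₀ hlam0.le hlam1.le
    have := mul_le_mul_of_nonneg_right h1 (norm_nonneg x)
    linarith
  have hA : ∀ (n : ℕ) (x : EuclideanSpace ℝ (Fin m)), ‖x‖ < ε →
      φ^[n] (e x) = e (lam ^ n • x) := by
    intro n x hx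
    induction n with
    | zero => simp
    | succ k ih =>
      rw [Function.iterate_succ_apply', ih, he_eq _ (hsmall k x hx), smul_smul, pow_succ']
  have hB : ∀ C : ℝ, ∃ N : ℕ, ∀ n ≥ N, lam ^ n * C < ε := by
    intro C
    have h := (tendsto_pow_atTop_nhds_zero_of_lt_one hlam0.le hlam1).mul_const C
    rw [zero_mul] at h
    exact Filter.eventually_atTop.1 (h.eventually (gt_mem_nhds hε))
  have hB' : ∀ x : EuclideanSpace ℝ (Fin m), ∃ N : ℕ, ∀ n ≥ N, ‖lam ^ n • x‖ < ε := by
    intro x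
    obtain ⟨N, hN⟩ := hB ‖x‖
    refine ⟨N, fun n hn => ?_⟩
    rw [norm_smul, Real.norm_of_nonneg (pow_pos hlam0 n).le]
    exact hN n hn
  have hex : ∀ x : EuclideanSpace ℝ (Fin m), ∃ z : X, ∀ n : ℕ, ‖lam ^ n • x‖ < ε →
      φ^[n] z = e (lam ^ n • x) := by
    intro x
    obtain ⟨N, hN⟩ := hB' x
    obtain ⟨z, hz⟩ := hφbij.2.iterate N (e (lam ^ N • x))
    refine ⟨z, fun n hn => ?_⟩
    rcases le_total N n with h | h
    · obtain ⟨k, rfl⟩ := Nat.exists_eq_add_of_le' h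
      rw [Function.iterate_add_apply, hz, hA k _ (hN N le_rfl), smul_smul, pow_add]
    · obtain ⟨k, rfl⟩ := Nat.exists_eq_add_of_le' h
      apply hφbij.1.iterate k
      rw [← Function.iterate_add_apply, hz, hA k _ hn, smul_smul, pow_add]
  choose Φ hΦ using hex
  refine ⟨Φ, ?_, ?_, ?_⟩
  · intro z
    obtain ⟨n, hn⟩ := hB (dist z (e 0))
    have h0 : φ^[n] (e 0) = e 0 := by
      rw [hA n 0 (by simpa using hε), smul_zero]
    have hmem : φ^[n] z ∈ Metric.ball (e 0) ε := by
      rw [Metric.mem_ball]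
      have h1 := hsim n z (e 0)
      rw [h0] at h1
      rw [h1]
      exact hn n le_rfl
    rw [← he_im] at hmem
    obtain ⟨w, hw, hwz⟩ := hmem
    have hw' : lam ^ n • ((lam ^ n)⁻¹ • w) = w := smul_inv_smul₀ (pow_pos hlam0 n).ne' w
    refine ⟨(lam ^ n)⁻¹ • w, hφbij.1.iterate n ?_⟩
    rw [hΦ _ n (by rw [hw']; exact hw), hw', hwz]
  · refine Isometry.of_dist_eq fun x y => ?_
    obtain ⟨N, hN⟩ := hB' x
    obtain ⟨M, hM⟩ := hB' y
    have hx := hN (max N M) (le_max_left _ _)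
    have hy := hM (max N M) (le_max_right _ _)
    have hp : 0 < lam ^ (max N M) := pow_pos hlam0 _
    have h := hsim (max N M) (Φ x) (Φ y)
    rw [hΦ x _ hx, hΦ y _ hy, he_iso _ _ hx hy, ← smul_sub, norm_smul,
      Real.norm_of_nonneg hp.le] at h
    rw [dist_eq_norm x y]
    exact (mul_left_cancel₀ hp.ne' h).symm
  · intro x hx
    simpa using hΦ x 0 (by simpa using hx)
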